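/- arXiv:cs/0312045 — 2 statements merged into one kernel-verified Lean document; each statement's English description precedes it below -/
import Mathlib

section
/- For any program Ω with weight constraints, a consistent set Z of literals is an answer set for Ω if and only if Z is an answer set for the program with nested expressions [Ω]. -/
open Classical

/-- A literal: a propositional atom `a` or its classical negation `¬ a`. -/
inductive Lit (α : Type) where
  | pos : α → Lit α
  | neg : α → Lit α

/-- The atom of a literal. -/
def Lit.atom {α : Type} : Lit α → α
  | .pos a => a
  | .neg a => a

/-- Mapping literals along a map of atoms. -/
def Lit.map {α β : Type} (f : α → β) : Lit α → Lit β
  | .pos a => .pos (f a)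
  | .neg a => .neg (f a)

/-- A set of literals is consistent if it contains no pair `a`, `¬ a`. -/
def LitConsistent {α : Type} (Z : Set (Lit α)) : Prop :=
  ∀ a : α, ¬(Lit.pos a ∈ Z ∧ Lit.neg a ∈ Z)

/-- Formulas (nested expressions): elementary formulas are literals, `⊥` and `⊤`;
formulas are built from them using negation as failure `naf`, conjunction `conj`
and disjunction `disj`. -/
inductive Formula (α : Type) where
  | lit : Lit α → Formula α
  | fbot : Formula α
  | ftop : Formula α
  | naf : Formula α → Formula α
  | conj : Formula α → Formula α → Formula α
  | disj : Formula α → Formula α → Formula α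

/-- Satisfaction of a formula by a set of literals. -/
def Formula.sat {α : Type} (Z : Set (Lit α)) : Formula α → Prop
  | .lit l => l ∈ Z
  | .fbot => False
  | .ftop => True
  | .naf F => ¬ F.sat Z
  | .conj F G => F.sat Z ∧ G.sat Z
  | .disj F G => F.sat Z ∨ G.sat Z

/-- A rule with nested expressions: `head ← body`. -/
structure NRule (α : Type) where
  head : Formula α
  body : Formula α

/-- `Z` satisfies a program (a set of rules). -/
def progSat {α : Type} (Z : Set (Lit α)) (P : Set (NRule α)) : Prop :=
  ∀ r ∈ P, r.body.sat Z → r.head.sat Z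

/-- The reduct `F^Z` of a formula relative to a set of literals `Z`. -/
noncomputable def Formula.reduct {α : Type} (Z : Set (Lit α)) : Formula α → Formula α
  | .lit l => .lit l
  | .fbot => .fbot
  | .ftop => .ftop
  | .naf F => if F.sat Z then .fbot else .ftop
  | .conj F G => .conj (F.reduct Z) (G.reduct Z)
  | .disj F G => .disj (F.reduct Z) (G.reduct Z)

/-- The reduct `Π^Z` of a program. -/
noncomputable def progReduct {α : Type} (Z : Set (Lit α)) (P : Set (NRule α)) : Set (NRule α) :=
  (fun r : NRule α => NRule.mk (r.head.reduct Z) (r.body.reduct Z)) '' P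

/-- `Z` is minimal (under inclusion) among the consistent sets of literals satisfying `P`. -/
def MinimalSat {α : Type} (Z : Set (Lit α)) (P : Set (NRule α)) : Prop :=
  LitConsistent Z ∧ progSat Z P ∧
    ∀ Z' : Set (Lit α), LitConsistent Z' → progSat Z' P → Z' ⊆ Z → Z' = Z

/-- `Z` is an answer set for a program `P` with nested expressions:
`Z` is minimal among the consistent sets satisfying the reduct `P^Z`. -/
def AnswerSet {α : Type} (Z : Set (Lit α)) (P : Set (NRule α)) : Prop :=
  MinimalSat Z (progReduct Z P)

/-- Strong equivalence of programs with nested expressions. -/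
def StrongEq {α : Type} (P₁ P₂ : Set (NRule α)) : Prop :=
  ∀ P : Set (NRule α), ∀ Z : Set (Lit α), AnswerSet Z (P₁ ∪ P) ↔ AnswerSet Z (P₂ ∪ P)

/-- Multiple conjunction (the empty conjunction is `⊤`). -/
def bigConj {α : Type} : List (Formula α) → Formula α
  | [] => .ftop
  | F :: Fs => .conj F (bigConj Fs)

/-- Multiple disjunction (the empty disjunction is `⊥`). -/
def bigDisj {α : Type} : List (Formula α) → Formula α
  | [] => .fbot
  | F :: Fs => .disj F (bigDisj Fs)

/-- `⟨F₁,…,F_n⟩:X`: the disjunction over `I ∈ X` of the conjunctions of the `Fᵢ`, `i ∈ I`. -/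
noncomputable def angled {α : Type} {n : ℕ} (F : Fin n → Formula α) (X : Finset (Finset (Fin n))) :
    Formula α :=
  bigDisj (X.toList.map fun I => bigConj (I.toList.map F))
/-- A rule element: a literal (positive rule element) or a literal
prefixed with negation as failure (negative rule element). -/
inductive RElem (α : Type) where
  | pos : Lit α → RElem α
  | neg : Lit α → RElem α

/-- Satisfaction of a rule element by a set of literals. -/
def RElem.sat {α : Type} (Z : Set (Lit α)) : RElem α → Prop
  | .pos l => l ∈ Z
  | .neg l => l ∉ Z

/-- Whether a rule element is negative. -/
def RElem.isNegB {α : Type} : RElem α → Bool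
  | .pos _ => false
  | .neg _ => true

/-- The sum of the weights of the entries of `S` that are satisfied by `Z`. -/
noncomputable def weightSum {α : Type} (Z : Set (Lit α)) (S : List (RElem α × ℝ)) : ℝ :=
  (S.map fun p => if p.1.sat Z then p.2 else 0).sum

/-- A weight constraint `L ≤ {c₁=w₁,…,c_m=w_m} ≤ U` with nonnegative weights;
`L` and `U` may be `−∞`/`+∞`. -/
structure WConstraint (α : Type) where
  L : EReal
  S : List (RElem α × ℝ)
  U : EReal
  nonneg : ∀ p ∈ S, (0 : ℝ) ≤ p.2

/-- `Z` satisfies the weight constraint `L ≤ S ≤ U`. -/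
def WConstraint.sat {α : Type} (Z : Set (Lit α)) (C : WConstraint α) : Prop :=
  C.L ≤ (weightSum Z C.S : EReal) ∧ (weightSum Z C.S : EReal) ≤ C.U

/-- A rule with weight constraints, `C₀ ← C₁,…,C_n`. -/
structure WRule (α : Type) where
  head : WConstraint α
  body : List (WConstraint α)

/-- `Z` satisfies a program with weight constraints. -/
def wProgSat {α : Type} (Z : Set (Lit α)) (Ω : Set (WRule α)) : Prop :=
  ∀ R ∈ Ω, (∀ C ∈ R.body, C.sat Z) → R.head.sat Z

/-- A weight constraint of the form `L ≤ S` (no upper bound), with nonnegative weights. -/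
structure LConstraint (α : Type) where
  L : EReal
  S : List (RElem α × ℝ)
  nonneg : ∀ p ∈ S, (0 : ℝ) ≤ p.2

/-- Satisfaction of a lower-bound constraint (by an arbitrary set of literals). -/
def LConstraint.sat {α : Type} (Z : Set (Lit α)) (C : LConstraint α) : Prop :=
  C.L ≤ (weightSum Z C.S : EReal)

/-- A Horn rule: a literal as head, lower-bound constraints as body. -/
structure HornRule (α : Type) where
  head : Lit α
  body : List (LConstraint α)

/-- Satisfaction of a set of Horn rules by an arbitrary set of literals. -/
def hornSat {α : Type} (Z : Set (Lit α)) (P : Set (HornRule α)) : Prop :=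
  ∀ r ∈ P, (∀ C ∈ r.body, C.sat Z) → r.head ∈ Z

/-- The deductive closure of a set of Horn rules: its unique minimal satisfying
set of literals (the intersection of all satisfying sets). -/
def cl {α : Type} (P : Set (HornRule α)) : Set (Lit α) :=
  ⋂₀ {Z : Set (Lit α) | hornSat Z P}

/-- The sum of the weights of the negative entries of `S` satisfied by `Z`. -/
noncomputable def negSatWeight {α : Type} (Z : Set (Lit α)) (S : List (RElem α × ℝ)) : ℝ :=
  (S.map fun p => if p.1.isNegB = true ∧ p.1.sat Z then p.2 else 0).sum

/-- The reduct `(L ≤ S)^Z` of a lower-bound constraint: drop the negative entries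
of `S` and decrease `L` by the total weight of the negative entries satisfied by `Z`. -/
noncomputable def LConstraint.reduct {α : Type} (Z : Set (Lit α)) (C : LConstraint α) :
    LConstraint α :=
  ⟨C.L - ((negSatWeight Z C.S : ℝ) : EReal),
   C.S.filter (fun p => !p.1.isNegB),
   fun p hp => C.nonneg p (List.mem_of_mem_filter hp)⟩

/-- The lower-bound part `L ≤ S` of a weight constraint `L ≤ S ≤ U`. -/
def WConstraint.lower {α : Type} (C : WConstraint α) : LConstraint α :=
  ⟨C.L, C.S, C.nonneg⟩

/-- The positive rule elements (as literals) occurring in `S`. -/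
def posElems {α : Type} (S : List (RElem α × ℝ)) : Set (Lit α) :=
  {l : Lit α | ∃ w : ℝ, (RElem.pos l, w) ∈ S}

/-- The reduct `Ω^Z` of a program with weight constraints: for each rule
`L₀≤S₀≤U₀ ← C₁,…,C_n` whose upper bounds are all satisfied by `Z`, the Horn rules
`l ← C₁^Z,…,C_n^Z` for all positive rule elements `l` of `S₀` with `l ∈ Z`. -/
noncomputable def wProgReduct {α : Type} (Z : Set (Lit α)) (Ω : Set (WRule α)) :
    Set (HornRule α) :=
  { r : HornRule α | ∃ R ∈ Ω,
      (∀ C ∈ R.body, (weightSum Z C.S : EReal) ≤ C.U) ∧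
      r.head ∈ posElems R.head.S ∧ r.head ∈ Z ∧
      r.body = R.body.map (fun C => C.lower.reduct Z) }

/-- `Z` is an answer set for the program `Ω` with weight constraints. -/
def WAnswerSet {α : Type} (Z : Set (Lit α)) (Ω : Set (WRule α)) : Prop :=
  LitConsistent Z ∧ wProgSat Z Ω ∧ cl (wProgReduct Z Ω) = Z

/-- Strong equivalence of programs with weight constraints. -/
def WStrongEq {α : Type} (Ω₁ Ω₂ : Set (WRule α)) : Prop :=
  ∀ Ω : Set (WRule α), ∀ Z : Set (Lit α), WAnswerSet Z (Ω₁ ∪ Ω) ↔ WAnswerSet Z (Ω₂ ∪ Ω)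

/-- A rule element as a formula: `l` becomes the literal `l`, `not l` becomes `naf l`. -/
def RElem.toFormula {α : Type} : RElem α → Formula α
  | .pos l => .lit l
  | .neg l => .naf (.lit l)

/-- The translation `[L ≤ S]`: the formula `⟨c₁,…,c_m⟩:{I : L ≤ Σ_{i∈I} wᵢ}`. -/
noncomputable def trLower {α : Type} (L : EReal) (S : List (RElem α × ℝ)) : Formula α :=
  angled (fun i : Fin S.length => (S.get i).1.toFormula)
    (Finset.univ.filter fun I : Finset (Fin S.length) =>
      L ≤ ((∑ i ∈ I, (S.get i).2 : ℝ) : EReal))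

/-- The translation `[S ≤ U]`: the formula `not ⟨c₁,…,c_m⟩:{I : U < Σ_{i∈I} wᵢ}`. -/
noncomputable def trUpper {α : Type} (S : List (RElem α × ℝ)) (U : EReal) : Formula α :=
  .naf (angled (fun i : Fin S.length => (S.get i).1.toFormula)
    (Finset.univ.filter fun I : Finset (Fin S.length) =>
      U < ((∑ i ∈ I, (S.get i).2 : ℝ) : EReal)))

/-- The translation `[L ≤ S ≤ U] = [L ≤ S],[S ≤ U]`. -/
noncomputable def trWC {α : Type} (C : WConstraint α) : Formula α :=
  .conj (trLower C.L C.S) (trUpper C.S C.U)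

/-- The formulas `l ; not l` for the positive rule elements `l` of `S`, in order. -/
def choiceFmls {α : Type} (S : List (RElem α × ℝ)) : List (Formula α) :=
  S.filterMap fun p =>
    match p.1 with
    | RElem.pos l => some (Formula.disj (.lit l) (.naf (.lit l)))
    | RElem.neg _ => none

/-- The translation of a rule with weight constraints `C₀ ← C₁,…,C_n`:
`(l₁; not l₁),…,(l_p; not l_p),[C₀] ← [C₁],…,[C_n]`. -/
noncomputable def trRule {α : Type} (R : WRule α) : NRule α :=
  ⟨bigConj (choiceFmls R.head.S ++ [trWC R.head]), bigConj (R.body.map trWC)⟩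

/-- The translation `[Ω]` of a program with weight constraints. -/
noncomputable def trProg {α : Type} (Ω : Set (WRule α)) : Set (NRule α) :=
  trRule '' Ω

/-- The nondisjunctive translation `[Ω]^{nd}`: each rule `C₀ ← C₁,…,C_n` is replaced
by the rules `l ← not not l, [C₁],…,[C_n]` for all positive rule elements `l` of `C₀`
together with `⊥ ← not [C₀], [C₁],…,[C_n]`. -/
noncomputable def ndTrans {α : Type} (Ω : Set (WRule α)) : Set (NRule α) :=
  { r : NRule α | ∃ R ∈ Ω,
      (∃ l ∈ posElems R.head.S,
        r = ⟨.lit l, bigConj (.naf (.naf (.lit l)) :: R.body.map trWC)⟩) ∨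
      r = ⟨.fbot, bigConj (.naf (trWC R.head) :: R.body.map trWC)⟩ }

/-!
Relative to a set `Z`, both reducts see a rule element in the same way: a positive one is left
alone and a negative one is evaluated at `Z`. Hence a set `Y` satisfies the reduct of `[L ≤ S]`
iff it satisfies the reduct of `L ≤ S`, each saying that the entries of `S` whose reducts hold in
`Y` weigh at least `L`; nonnegativity of the weights reduces the disjunction over subsets of `S`
to the largest admissible subset.

The heads `l; not l` of `[Ω]` say that `Y` contains the literals `l ∈ Z`, exactly as the heads
of the Horn rules do. Once they hold in some `Y ⊆ Z`, the sets `Y` and `Z` agree on the positive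
elements of the head, so the remaining head formula `[C₀]` only says that `Z` satisfies `C₀`.
Therefore, if `Z` satisfies `Ω`, the two reducts have the same models among the subsets of `Z`.
As the Horn reduct is monotone, its closure is `Z` iff `Z` is minimal among these models.
-/

variable {α : Type} {X Y Z : Set (Lit α)}

theorem LitConsistent.subset (hZ : LitConsistent Z) (hYZ : Y ⊆ Z) : LitConsistent Y :=
  fun a ha => hZ a ⟨hYZ ha.1, hYZ ha.2⟩

namespace Formula

theorem sat_reduct_naf (F : Formula α) : ((naf F).reduct Z).sat Y ↔ ¬ F.sat Z := by
  by_cases hF : F.sat Z <;> simp [reduct, sat, hF]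

theorem sat_reduct_self (F : Formula α) : (F.reduct Z).sat Z ↔ F.sat Z := by
  induction F with
  | lit | fbot | ftop => rfl
  | naf F _ => exact sat_reduct_naf F
  | conj F G ihF ihG => exact and_congr ihF ihG
  | disj F G ihF ihG => exact or_congr ihF ihG

theorem sat_reduct_mono (hXY : X ⊆ Y) (F : Formula α) :
    (F.reduct Z).sat X → (F.reduct Z).sat Y := by
  induction F with
  | lit l => exact fun hl => hXY hl
  | fbot | ftop => exact id
  | naf F _ => rw [sat_reduct_naf, sat_reduct_naf]; exact id
  | conj F G ihF ihG => exact And.imp ihF ihG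
  | disj F G ihF ihG => exact Or.imp ihF ihG

theorem sat_reduct_bigConj (Fs : List (Formula α)) :
    ((bigConj Fs).reduct Z).sat Y ↔ ∀ F ∈ Fs, (F.reduct Z).sat Y := by
  induction Fs with
  | nil => simp [bigConj, reduct, sat]
  | cons F Fs ih => simp [bigConj, reduct, sat, ih]

theorem sat_reduct_bigDisj (Fs : List (Formula α)) :
    ((bigDisj Fs).reduct Z).sat Y ↔ ∃ F ∈ Fs, (F.reduct Z).sat Y := by
  induction Fs with
  | nil => simp [bigDisj, reduct, sat]
  | cons F Fs ih => simp [bigDisj, reduct, sat, ih]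

theorem sat_reduct_angled {n : ℕ} (F : Fin n → Formula α) (𝓘 : Finset (Finset (Fin n))) :
    ((angled F 𝓘).reduct Z).sat Y ↔ ∃ I ∈ 𝓘, ∀ i ∈ I, ((F i).reduct Z).sat Y := by
  simp [angled, sat_reduct_bigDisj, sat_reduct_bigConj]

end Formula

theorem RElem.sat_toFormula (c : RElem α) : c.toFormula.sat Z ↔ c.sat Z := by
  cases c <;> rfl

/-- The total weight of the entries of `S` whose reduct relative to `Z` is satisfied by `Y`:
positive rule elements are evaluated at `Y` and negative ones at `Z`. -/
noncomputable def reductWeightSum (Z Y : Set (Lit α)) (S : List (RElem α × ℝ)) : ℝ :=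
  (S.map fun p => if (p.1.toFormula.reduct Z).sat Y then p.2 else 0).sum

theorem reductWeightSum_self (S : List (RElem α × ℝ)) :
    reductWeightSum Z Z S = weightSum Z S := by
  simp only [reductWeightSum, weightSum, Formula.sat_reduct_self, RElem.sat_toFormula]

theorem reductWeightSum_congr {S : List (RElem α × ℝ)}
    (h : ∀ l ∈ posElems S, l ∈ X ↔ l ∈ Y) : reductWeightSum Z X S = reductWeightSum Z Y S := by
  refine congrArg List.sum (List.map_congr_left ?_)
  rintro ⟨c, w⟩ hc
  refine if_congr ?_ rfl rfl
  cases c with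
  | pos l => exact h l ⟨w, hc⟩
  | neg l => exact (Formula.sat_reduct_naf _).trans (Formula.sat_reduct_naf _).symm

theorem reductWeightSum_eq_weightSum_add_negSatWeight (S : List (RElem α × ℝ)) :
    reductWeightSum Z Y S =
      weightSum Y (S.filter fun p => !p.1.isNegB) + negSatWeight Z S := by
  unfold reductWeightSum weightSum negSatWeight
  induction S with
  | nil => simp
  | cons p S ih =>
    obtain ⟨l | l, w⟩ := p
    · have hpos : (RElem.pos l).isNegB = false := rfl
      have hsat : ((RElem.pos l).toFormula.reduct Z).sat Y ↔ (RElem.pos l).sat Y := Iff.rfl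
      simp [ih, hpos, hsat, add_assoc]
    · have hneg : (RElem.neg l).isNegB = true := rfl
      have hsat : ((RElem.neg l).toFormula.reduct Z).sat Y ↔ (RElem.neg l).sat Z :=
        Formula.sat_reduct_naf _
      simp [ih, hneg, hsat, add_left_comm]

theorem reductWeightSum_eq_sum_filter (S : List (RElem α × ℝ)) :
    reductWeightSum Z Y S =
      ∑ i : Fin S.length with ((S.get i).1.toFormula.reduct Z).sat Y, (S.get i).2 := by
  rw [Finset.sum_filter, ← List.sum_ofFn, reductWeightSum]
  congr 1
  apply List.ext_getElem <;> simp

theorem LConstraint.sat_reduct_iff (C : LConstraint α) :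
    (C.reduct Z).sat Y ↔ C.L ≤ (reductWeightSum Z Y C.S : EReal) := by
  rw [reductWeightSum_eq_weightSum_add_negSatWeight, EReal.coe_add]
  exact EReal.sub_le_iff_le_add (Or.inl (EReal.coe_ne_bot _)) (Or.inl (EReal.coe_ne_top _))

theorem exists_finset_sum_mem_iff {ι M : Type*} [Fintype ι] [AddCommMonoid M] [PartialOrder M]
    [IsOrderedAddMonoid M] {w : ι → M} (hw : ∀ i, 0 ≤ w i) (p : ι → Prop) [DecidablePred p]
    {s : Set M} (hs : IsUpperSet s) :
    (∃ I : Finset ι, ∑ i ∈ I, w i ∈ s ∧ ∀ i ∈ I, p i) ↔ ∑ i with p i, w i ∈ s := by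
  refine ⟨?_, fun h => ⟨_, h, fun i hi => (Finset.mem_filter.1 hi).2⟩⟩
  rintro ⟨I, hIs, hIp⟩
  have hI : I ⊆ Finset.univ.filter p := fun i hi =>
    Finset.mem_filter.2 ⟨Finset.mem_univ i, hIp i hi⟩
  exact hs (Finset.sum_le_sum_of_subset_of_nonneg hI fun i _ _ => hw i) hIs

section Translation

variable {S : List (RElem α × ℝ)}

theorem sat_reduct_angled_toFormula (hS : ∀ p ∈ S, (0 : ℝ) ≤ p.2) {s : Set ℝ}
    (hs : IsUpperSet s) {𝓘 : Finset (Finset (Fin S.length))}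
    (h𝓘 : ∀ I, I ∈ 𝓘 ↔ ∑ i ∈ I, (S.get i).2 ∈ s) :
    ((angled (fun i => (S.get i).1.toFormula) 𝓘).reduct Z).sat Y ↔ reductWeightSum Z Y S ∈ s := by
  simp only [Formula.sat_reduct_angled, h𝓘]
  rw [reductWeightSum_eq_sum_filter]
  exact exists_finset_sum_mem_iff (fun i => hS _ (S.get_mem i)) _ hs

theorem sat_reduct_trLower (hS : ∀ p ∈ S, (0 : ℝ) ≤ p.2) (L : EReal) :
    ((trLower L S).reduct Z).sat Y ↔ L ≤ (reductWeightSum Z Y S : EReal) :=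
  sat_reduct_angled_toFormula hS (s := {x : ℝ | L ≤ (x : EReal)})
    (fun _ _ hxy hx => le_trans hx (EReal.coe_le_coe_iff.2 hxy)) (by simp)

theorem sat_reduct_trUpper (hS : ∀ p ∈ S, (0 : ℝ) ≤ p.2) (U : EReal) :
    ((trUpper S U).reduct Z).sat Y ↔ (weightSum Z S : EReal) ≤ U := by
  rw [trUpper, Formula.sat_reduct_naf, ← Formula.sat_reduct_self, ← reductWeightSum_self, ← not_lt]
  exact not_congr <| sat_reduct_angled_toFormula hS (s := {x : ℝ | U < (x : EReal)})
    (fun _ _ hxy hx => lt_of_lt_of_le hx (EReal.coe_le_coe_iff.2 hxy)) (by simp)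

theorem sat_reduct_trWC (C : WConstraint α) :
    ((trWC C).reduct Z).sat Y ↔ (C.lower.reduct Z).sat Y ∧ (weightSum Z C.S : EReal) ≤ C.U := by
  rw [LConstraint.sat_reduct_iff]
  exact and_congr (sat_reduct_trLower C.nonneg C.L) (sat_reduct_trUpper C.nonneg C.U)

theorem sat_reduct_trWC_iff_sat {C : WConstraint α}
    (h : ∀ l ∈ posElems C.S, l ∈ Y ↔ l ∈ Z) : ((trWC C).reduct Z).sat Y ↔ C.sat Z := by
  have hsum : reductWeightSum Z Y C.lower.S = weightSum Z C.S :=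
    (reductWeightSum_congr h).trans (reductWeightSum_self C.S)
  rw [sat_reduct_trWC, LConstraint.sat_reduct_iff, hsum]
  rfl

theorem sat_reduct_choice (l : Lit α) :
    ((Formula.disj (.lit l) (.naf (.lit l))).reduct Z).sat Y ↔ (l ∈ Z → l ∈ Y) := by
  rw [imp_iff_or_not]
  exact or_congr Iff.rfl (Formula.sat_reduct_naf _)

theorem mem_choiceFmls {F : Formula α} :
    F ∈ choiceFmls S ↔ ∃ l ∈ posElems S, Formula.disj (.lit l) (.naf (.lit l)) = F := by
  simp only [choiceFmls, List.mem_filterMap]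
  constructor
  · rintro ⟨⟨l | l, w⟩, hl, hF⟩
    · exact ⟨l, ⟨w, hl⟩, Option.some.inj hF⟩
    · simp at hF
  · rintro ⟨l, ⟨w, hl⟩, rfl⟩
    exact ⟨_, hl, rfl⟩

theorem sat_reduct_choiceFmls :
    (∀ F ∈ choiceFmls S, (F.reduct Z).sat Y) ↔ posElems S ∩ Z ⊆ Y := by
  simp only [mem_choiceFmls, forall_exists_index, and_imp, forall_apply_eq_imp_iff₂,
    sat_reduct_choice, Set.subset_def, Set.mem_inter_iff]

end Translation

section HornRules

variable {P : Set (HornRule α)}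

theorem cl_subset (hY : hornSat Y P) : cl P ⊆ Y :=
  Set.sInter_subset_of_mem hY

theorem hornSat_cl (hP : ∀ r ∈ P, ∀ C ∈ r.body, Monotone fun Y => C.sat Y) :
    hornSat (cl P) P := fun r hr hbody =>
  Set.mem_sInter.2 fun _ hY => hY r hr fun C hC => hP r hr C hC (cl_subset hY) (hbody C hC)

theorem cl_eq_iff (hP : ∀ r ∈ P, ∀ C ∈ r.body, Monotone fun Y => C.sat Y) (hZ : hornSat Z P) :
    cl P = Z ↔ ∀ Y ⊆ Z, hornSat Y P → Y = Z := by
  constructor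
  · rintro rfl Y hYZ hY
    exact hYZ.antisymm (cl_subset hY)
  · intro hmin
    exact hmin (cl P) (cl_subset hZ) (hornSat_cl hP)

end HornRules

theorem LConstraint.monotone_sat_reduct (C : LConstraint α) :
    Monotone fun Y => (C.reduct Z).sat Y := fun X Y hXY => by
  simp only [sat_reduct_iff, ← sat_reduct_trLower C.nonneg]
  exact Formula.sat_reduct_mono hXY _

section Programs

variable {Ω : Set (WRule α)}

theorem progSat_progReduct_trProg_iff :
    progSat Y (progReduct Z (trProg Ω)) ↔ ∀ R ∈ Ω,
      (∀ C ∈ R.body, ((trWC C).reduct Z).sat Y) →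
        posElems R.head.S ∩ Z ⊆ Y ∧ ((trWC R.head).reduct Z).sat Y := by
  simp only [progSat, progReduct, trProg, Set.forall_mem_image, trRule,
    Formula.sat_reduct_bigConj, List.forall_mem_append, List.forall_mem_map,
    List.forall_mem_singleton, sat_reduct_choiceFmls]

theorem hornSat_wProgReduct_iff :
    hornSat Y (wProgReduct Z Ω) ↔ ∀ R ∈ Ω,
      (∀ C ∈ R.body, ((trWC C).reduct Z).sat Y) → posElems R.head.S ∩ Z ⊆ Y := by
  simp only [sat_reduct_trWC]
  constructor
  · rintro hY R hR hbody l ⟨hl, hlZ⟩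
    refine hY ⟨l, R.body.map fun C => C.lower.reduct Z⟩
      ⟨R, hR, fun C hC => (hbody C hC).2, hl, hlZ, rfl⟩ ?_
    exact List.forall_mem_map.2 fun C hC => (hbody C hC).1
  · rintro h ⟨l, _⟩ ⟨R, hR, hupper, hl, hlZ, rfl⟩ hbody
    rw [List.forall_mem_map] at hbody
    exact h R hR (fun C hC => ⟨hbody C hC, hupper C hC⟩) ⟨hl, hlZ⟩

theorem hornSat_wProgReduct_self : hornSat Z (wProgReduct Z Ω) :=
  hornSat_wProgReduct_iff.2 fun _ _ _ => Set.inter_subset_right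

theorem progSat_progReduct_trProg_self :
    progSat Z (progReduct Z (trProg Ω)) ↔ wProgSat Z Ω := by
  simp only [progSat_progReduct_trProg_iff, sat_reduct_trWC_iff_sat fun _ _ => Iff.rfl,
    Set.inter_subset_right, true_and, wProgSat]

theorem progSat_progReduct_trProg_iff_hornSat (hΩ : wProgSat Z Ω) (hYZ : Y ⊆ Z) :
    progSat Y (progReduct Z (trProg Ω)) ↔ hornSat Y (wProgReduct Z Ω) := by
  rw [progSat_progReduct_trProg_iff, hornSat_wProgReduct_iff]
  refine forall₂_congr fun R hR => forall_congr' fun hbody => and_iff_left_of_imp fun hpos => ?_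
  have hbodyZ : ∀ C ∈ R.body, C.sat Z := fun C hC =>
    (sat_reduct_trWC_iff_sat fun _ _ => Iff.rfl).1 (Formula.sat_reduct_mono hYZ _ (hbody C hC))
  have hagree : ∀ l ∈ posElems R.head.S, l ∈ Y ↔ l ∈ Z := fun l hl =>
    ⟨fun hlY => hYZ hlY, fun hlZ => hpos ⟨hl, hlZ⟩⟩
  exact (sat_reduct_trWC_iff_sat hagree).2 (hΩ R hR hbodyZ)

theorem cl_wProgReduct_eq_iff :
    cl (wProgReduct Z Ω) = Z ↔ ∀ Y ⊆ Z, hornSat Y (wProgReduct Z Ω) → Y = Z := by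
  refine cl_eq_iff ?_ hornSat_wProgReduct_self
  rintro ⟨_, _⟩ ⟨R, _, _, _, _, rfl⟩
  exact List.forall_mem_map.2 fun C _ => C.lower.monotone_sat_reduct

end Programs

theorem theorem_1_general (Ω : Set (WRule α)) (Z : Set (Lit α)) :
    WAnswerSet Z Ω ↔ AnswerSet Z (trProg Ω) := by
  refine and_congr_right fun hZ => ?_
  rw [progSat_progReduct_trProg_self]
  refine and_congr_right fun hΩ => ?_
  rw [cl_wProgReduct_eq_iff]
  constructor
  · intro hmin Y _ hY hYZ
    exact hmin Y hYZ ((progSat_progReduct_trProg_iff_hornSat hΩ hYZ).1 hY)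
  · intro hmin Y hYZ hY
    exact hmin Y (hZ.subset hYZ) ((progSat_progReduct_trProg_iff_hornSat hΩ hYZ).2 hY) hYZ

/-- Theorem 1: a consistent set `Z` of literals is an answer set for a program `Ω`
with weight constraints iff `Z` is an answer set for its translation `[Ω]`. -/
theorem theorem_1 (Ω : Set (WRule ℕ)) (Z : Set (Lit ℕ)) (hZ : LitConsistent Z) :
    WAnswerSet Z Ω ↔ AnswerSet Z (trProg Ω) :=
  theorem_1_general Ω Z
end

section
/- There is a constant K > 0 such that for every finite program Ω with weight constraints in which every weight is an integer, the number of weight atoms occurring in the nonnested translation [Ω]^{nn} is at most K · Σ_C (L(C)+1)·(W(C)+1), where the sum ranges over all weight constraints C occurring in Ω, L(C) denotes the length of C (the number of rule elements of C) and W(C) denotes the weight of C (the sum of its weights). -/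
open Classical

/-- The atoms occurring in a formula. -/
def Formula.atoms {α : Type} : Formula α → Set α
  | .lit l => {l.atom}
  | .fbot => ∅
  | .ftop => ∅
  | .naf F => F.atoms
  | .conj F G => F.atoms ∪ G.atoms
  | .disj F G => F.atoms ∪ G.atoms

/-- The atom `a` occurs in the program `P`. -/
def atomOccurs {α : Type} (a : α) (P : Set (NRule α)) : Prop :=
  ∃ r ∈ P, a ∈ r.head.atoms ∨ a ∈ r.body.atoms

/-- The extended vocabulary for the nonnested translation: the original (base) atoms
together with the fresh negation atoms `q_{not l}` and weight atoms `q_{w≤S}`, `q_{w<S}`. -/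
inductive AtomX where
  | base : ℕ → AtomX
  | qnot : Lit ℕ → AtomX
  | qle : EReal → List (RElem ℕ × ℝ) → AtomX
  | qlt : EReal → List (RElem ℕ × ℝ) → AtomX

/-- An atom viewed as a formula. -/
def atomFml (a : AtomX) : Formula AtomX := .lit (.pos a)

/-- A rule element over the base atoms, as a formula over the extended vocabulary. -/
def reFmlX : RElem ℕ → Formula AtomX
  | .pos l => .lit (l.map AtomX.base)
  | .neg l => .naf (.lit (l.map AtomX.base))

/-- The total weight `w₁ + … + w_m` of `S`. -/
def sumW (S : List (RElem ℕ × ℝ)) : ℝ := (S.map Prod.snd).sum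

/-- A program is closed if it contains the defining rules for every weight atom
occurring in it: for `q_{w≤S}`, the fact `q_{w≤S}` if `w ≤ 0`, and the rules
`q_{w≤S} ← q_{w≤S'}` and `q_{w≤S} ← c_m, q_{w−w_m≤S'}` if `0 < w ≤ w₁+…+w_m`
(where `S = S' ++ [(c_m,w_m)]`); analogously for `q_{w<S}`. -/
def ClosedProg (P : Set (NRule AtomX)) : Prop :=
  (∀ (w : EReal) (S : List (RElem ℕ × ℝ)), atomOccurs (AtomX.qle w S) P →
    (w ≤ 0 → (⟨atomFml (.qle w S), .ftop⟩ : NRule AtomX) ∈ P) ∧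
    (0 < w → w ≤ ((sumW S : ℝ) : EReal) →
      ∃ (S' : List (RElem ℕ × ℝ)) (c : RElem ℕ) (wm : ℝ),
        S = S' ++ [(c, wm)] ∧
        (⟨atomFml (.qle w S), atomFml (.qle w S')⟩ : NRule AtomX) ∈ P ∧
        (⟨atomFml (.qle w S),
          .conj (reFmlX c) (atomFml (.qle (w - ((wm : ℝ) : EReal)) S'))⟩ :
            NRule AtomX) ∈ P)) ∧
  (∀ (w : EReal) (S : List (RElem ℕ × ℝ)), atomOccurs (AtomX.qlt w S) P →
    (w < 0 → (⟨atomFml (.qlt w S), .ftop⟩ : NRule AtomX) ∈ P) ∧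
    (0 ≤ w → w < ((sumW S : ℝ) : EReal) →
      ∃ (S' : List (RElem ℕ × ℝ)) (c : RElem ℕ) (wm : ℝ),
        S = S' ++ [(c, wm)] ∧
        (⟨atomFml (.qlt w S), atomFml (.qlt w S')⟩ : NRule AtomX) ∈ P ∧
        (⟨atomFml (.qlt w S),
          .conj (reFmlX c) (atomFml (.qlt (w - ((wm : ℝ) : EReal)) S'))⟩ :
            NRule AtomX) ∈ P))

/-- The nonnested translation `[L ≤ S ≤ U]^{nn} = q_{L≤S}, not q_{U<S}`. -/
def nnWC (C : WConstraint ℕ) : Formula AtomX :=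
  .conj (atomFml (.qle C.L C.S)) (.naf (atomFml (.qlt C.U C.S)))

/-- The basic rules of the nonnested translation: for every rule
`L₀≤S₀≤U₀ ← C₁,…,C_n` of `Ω`, the rules `q_{not l} ← not l` and
`l ← not q_{not l}, [C₁]^{nn},…,[C_n]^{nn}` for each positive rule element `l` of `S₀`,
and the rules `⊥ ← not q_{L₀≤S₀}, [C₁]^{nn},…,[C_n]^{nn}` and
`⊥ ← q_{U₀<S₀}, [C₁]^{nn},…,[C_n]^{nn}`. -/
def nnBase (Ω : Set (WRule ℕ)) : Set (NRule AtomX) :=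
  { r : NRule AtomX | ∃ R ∈ Ω,
      (∃ l ∈ posElems R.head.S,
        r = ⟨atomFml (.qnot l), .naf (.lit (l.map AtomX.base))⟩ ∨
        r = ⟨.lit (l.map AtomX.base),
             bigConj (.naf (atomFml (.qnot l)) :: R.body.map nnWC)⟩) ∨
      r = ⟨.fbot,
           bigConj (.naf (atomFml (.qle R.head.L R.head.S)) :: R.body.map nnWC)⟩ ∨
      r = ⟨.fbot,
           bigConj (atomFml (.qlt R.head.U R.head.S) :: R.body.map nnWC)⟩ }

/-- The nonnested translation `[Ω]^{nn}`: the smallest closed program containing the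
basic rules. -/
def nnTrans (Ω : Set (WRule ℕ)) : Set (NRule AtomX) :=
  ⋂₀ {P : Set (NRule AtomX) | nnBase Ω ⊆ P ∧ ClosedProg P}

/-- The new (fresh) atoms: negation atoms and weight atoms. -/
def AtomX.isNew : AtomX → Prop
  | .base _ => False
  | _ => True

/-- `Q_Ω`: the set of new atoms occurring in `[Ω]^{nn}`. -/
def QSet (Ω : Set (WRule ℕ)) : Set AtomX :=
  {a : AtomX | a.isNew ∧ atomOccurs a (nnTrans Ω)}

/-- The weight atoms. -/
def AtomX.isWeightAtom : AtomX → Prop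
  | .qle _ _ => True
  | .qlt _ _ => True
  | _ => False

/-- The weight constraints occurring in `Ω`. -/
def wcsOf (Ω : Set (WRule ℕ)) : Set (WConstraint ℕ) :=
  {C : WConstraint ℕ | ∃ R ∈ Ω, C = R.head ∨ C ∈ R.body}

/-!
The rules defining `q_{w≤S}` mention only `q_{w≤S'}` and `q_{w−w_m≤S'}`. Starting from `q_{L≤S}`,
one therefore meets only atoms `q_{L−n≤T}` where `T` is a prefix of `S` and `n` is a sum of
weights of entries outside `T`. If the weights are integers, then `n` is a natural number at most
`W`, so there are at most `(m+1)(W+1)` such atoms, and likewise for `q_{U<S}`. This invariant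
bounds the smallest closed program because the program of all rules built from such
atoms and nonweight atoms is itself closed.
-/

section Residuals

theorem sumW_append_singleton (T : List (RElem ℕ × ℝ)) (c : RElem ℕ) (v : ℝ) :
    sumW (T ++ [(c, v)]) = sumW T + v := by
  simp [sumW]

theorem sumW_nonneg {S : List (RElem ℕ × ℝ)} (hS : ∀ p ∈ S, (0 : ℝ) ≤ p.2) : 0 ≤ sumW S :=
  List.sum_nonneg (by simpa using fun v c h => hS (c, v) h)

theorem ne_nil_of_sumW_pos {S : List (RElem ℕ × ℝ)} (hS : 0 < sumW S) : S ≠ [] := by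
  rintro rfl
  simp [sumW] at hS

theorem ereal_sub_coe_sub_coe (a : EReal) (x y : ℝ) :
    a - (x : EReal) - (y : EReal) = a - ((x + y : ℝ) : EReal) := by
  induction a with
  | bot => simp
  | top => simp only [EReal.top_sub_coe]
  | coe a => norm_cast; ring

/-- A set containing every pair `(w, T)` that the recursion `(w, S) ↦ (w, S'), (w − w_m, S')`
reaches from `(b, S)` when the weights are natural numbers. Here `n` is the total weight subtracted
so far; it is quantified because `b − n` does not determine it when `b = ±∞`. -/
def residuals (b : EReal) (S : List (RElem ℕ × ℝ)) : Set (EReal × List (RElem ℕ × ℝ)) :=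
  {p | p.2 <+: S ∧ ∃ n : ℕ, p.1 = b - ((n : ℝ) : EReal) ∧ n + sumW p.2 ≤ sumW S}

variable {b w : EReal} {S T : List (RElem ℕ × ℝ)}

theorem self_mem_residuals (b : EReal) (S : List (RElem ℕ × ℝ)) : (b, S) ∈ residuals b S :=
  ⟨List.prefix_rfl, 0, by simp, by simp⟩

theorem mem_residuals_of_append_singleton_mem {c : RElem ℕ} {k : ℕ}
    (h : (w, T ++ [(c, (k : ℝ))]) ∈ residuals b S) :
    (w, T) ∈ residuals b S ∧ (w - ((k : ℝ) : EReal), T) ∈ residuals b S := by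
  obtain ⟨hpre, n, rfl, hn⟩ := h
  rw [sumW_append_singleton] at hn
  have hT : T <+: S := (List.prefix_append _ _).trans hpre
  refine ⟨⟨hT, n, rfl, by linarith [k.cast_nonneg (α := ℝ)]⟩, hT, n + k, ?_, ?_⟩
  · rw [ereal_sub_coe_sub_coe, Nat.cast_add]
  · push_cast
    linarith

theorem residuals_subset_image (b : EReal) (hS : ∀ p ∈ S, (0 : ℝ) ≤ p.2) :
    residuals b S ⊆
      (Finset.range (S.length + 1) ×ˢ Finset.range (⌊sumW S⌋₊ + 1)).image
        fun p : ℕ × ℕ => (b - ((p.2 : ℝ) : EReal), S.take p.1) := by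
  rintro ⟨w, T⟩ ⟨hpre, n, rfl, hn⟩
  have hT : 0 ≤ sumW T := sumW_nonneg fun p hp => hS p (hpre.subset hp)
  have hn' : n ≤ ⌊sumW S⌋₊ := Nat.le_floor (by linarith)
  refine Finset.mem_image.2 ⟨(T.length, n), ?_, by rw [← List.prefix_iff_eq_take.1 hpre]⟩
  simpa [Nat.lt_succ_iff] using ⟨hpre.length_le, hn'⟩

theorem finite_residuals (b : EReal) (hS : ∀ p ∈ S, (0 : ℝ) ≤ p.2) : (residuals b S).Finite :=
  (Finset.finite_toSet _).subset (residuals_subset_image b hS)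

theorem ncard_residuals_le (b : EReal) (hS : ∀ p ∈ S, (0 : ℝ) ≤ p.2) :
    ((residuals b S).ncard : ℝ) ≤ (S.length + 1) * (sumW S + 1) := by
  have hcard : (residuals b S).ncard ≤ (S.length + 1) * (⌊sumW S⌋₊ + 1) := by
    refine (Set.ncard_le_ncard (residuals_subset_image b hS) (Finset.finite_toSet _)).trans ?_
    rw [Set.ncard_coe_finset]
    exact Finset.card_image_le.trans (by simp)
  calc ((residuals b S).ncard : ℝ) ≤ (S.length + 1) * (⌊sumW S⌋₊ + 1) := mod_cast hcard
    _ ≤ (S.length + 1) * (sumW S + 1) := by gcongr; exact Nat.floor_le (sumW_nonneg hS)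

end Residuals

namespace WConstraint

/-- The weight atoms built from the residuals of a constraint `L ≤ S ≤ U`, which include all those
that it contributes to the nonnested translation when its weights are integers. -/
def weightAtoms (C : WConstraint ℕ) : Set AtomX :=
  Function.uncurry AtomX.qle '' residuals C.L C.S ∪ Function.uncurry AtomX.qlt '' residuals C.U C.S

variable {C : WConstraint ℕ} {w : EReal} {T : List (RElem ℕ × ℝ)}

theorem qle_mem_weightAtoms : AtomX.qle w T ∈ C.weightAtoms ↔ (w, T) ∈ residuals C.L C.S := by
  simp [weightAtoms]

theorem qlt_mem_weightAtoms : AtomX.qlt w T ∈ C.weightAtoms ↔ (w, T) ∈ residuals C.U C.S := by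
  simp [weightAtoms]

theorem finite_weightAtoms (C : WConstraint ℕ) : C.weightAtoms.Finite :=
  ((finite_residuals _ C.nonneg).image _).union ((finite_residuals _ C.nonneg).image _)

theorem ncard_weightAtoms_le (C : WConstraint ℕ) :
    (C.weightAtoms.ncard : ℝ) ≤ 2 * ((C.S.length + 1) * (sumW C.S + 1)) := by
  have hcard : C.weightAtoms.ncard ≤ (residuals C.L C.S).ncard + (residuals C.U C.S).ncard :=
    (Set.ncard_union_le _ _).trans <| add_le_add
      (Set.ncard_image_le (finite_residuals _ C.nonneg))
      (Set.ncard_image_le (finite_residuals _ C.nonneg))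
  calc (C.weightAtoms.ncard : ℝ)
      ≤ (residuals C.L C.S).ncard + (residuals C.U C.S).ncard := mod_cast hcard
    _ ≤ (C.S.length + 1) * (sumW C.S + 1) + (C.S.length + 1) * (sumW C.S + 1) :=
        add_le_add (ncard_residuals_le _ C.nonneg) (ncard_residuals_le _ C.nonneg)
    _ = 2 * ((C.S.length + 1) * (sumW C.S + 1)) := (two_mul _).symm

end WConstraint

section RulesOver

/-- The program consisting of all rules whose atoms lie in `A`. -/
def rulesOver {α : Type} (A : Set α) : Set (NRule α) :=
  {r | r.head.atoms ⊆ A ∧ r.body.atoms ⊆ A}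

theorem mem_of_atomOccurs {α : Type} {A : Set α} {a : α} {P : Set (NRule α)}
    (hP : P ⊆ rulesOver A) (ha : atomOccurs a P) : a ∈ A := by
  obtain ⟨r, hr, ha⟩ := ha
  exact ha.elim (fun h => (hP hr).1 h) fun h => (hP hr).2 h

theorem atoms_bigConj_subset {α : Type} {A : Set α} {Fs : List (Formula α)}
    (h : ∀ F ∈ Fs, F.atoms ⊆ A) : (bigConj Fs).atoms ⊆ A := by
  induction Fs with
  | nil => exact Set.empty_subset A
  | cons F Fs ih =>
    rw [List.forall_mem_cons] at h
    exact Set.union_subset h.1 (ih h.2)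

theorem atoms_atomFml_subset {A : Set AtomX} {a : AtomX} : (atomFml a).atoms ⊆ A ↔ a ∈ A :=
  Set.singleton_subset_iff

theorem atoms_nnWC_subset {A : Set AtomX} {C : WConstraint ℕ} :
    (nnWC C).atoms ⊆ A ↔ AtomX.qle C.L C.S ∈ A ∧ AtomX.qlt C.U C.S ∈ A :=
  Set.union_subset_iff.trans (and_congr atoms_atomFml_subset atoms_atomFml_subset)

variable {A : Set AtomX}

theorem atoms_lit_map_base_subset (hA : ∀ n, AtomX.base n ∈ A) (l : Lit ℕ) :
    (Formula.lit (l.map AtomX.base)).atoms ⊆ A := by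
  cases l <;> exact Set.singleton_subset_iff.2 (hA _)

theorem atoms_reFmlX_subset (hA : ∀ n, AtomX.base n ∈ A) (c : RElem ℕ) :
    (reFmlX c).atoms ⊆ A := by
  cases c <;> exact atoms_lit_map_base_subset hA _

theorem nnBase_subset_rulesOver (hA : {a : AtomX | ¬ a.isWeightAtom} ⊆ A) {Ω : Set (WRule ℕ)}
    (hΩ : ∀ C ∈ wcsOf Ω, AtomX.qle C.L C.S ∈ A ∧ AtomX.qlt C.U C.S ∈ A) :
    nnBase Ω ⊆ rulesOver A := by
  rintro r ⟨R, hR, hr⟩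
  obtain ⟨hL, hU⟩ := hΩ R.head ⟨R, hR, Or.inl rfl⟩
  have hlit := atoms_lit_map_base_subset fun n => hA (id : ¬ (AtomX.base n).isWeightAtom)
  have hbody : ∀ F : Formula AtomX, F.atoms ⊆ A → (bigConj (F :: R.body.map nnWC)).atoms ⊆ A := by
    refine fun F hF => atoms_bigConj_subset (List.forall_mem_cons.2 ⟨hF, ?_⟩)
    exact List.forall_mem_map.2 fun C hC => atoms_nnWC_subset.2 (hΩ C ⟨R, hR, Or.inr hC⟩)
  rcases hr with ⟨l, -, rfl | rfl⟩ | rfl | rfl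
  · exact ⟨atoms_atomFml_subset.2 (hA id), hlit l⟩
  · exact ⟨hlit l, hbody _ (atoms_atomFml_subset.2 (hA id))⟩
  · exact ⟨Set.empty_subset A, hbody _ (atoms_atomFml_subset.2 hL)⟩
  · exact ⟨Set.empty_subset A, hbody _ (atoms_atomFml_subset.2 hU)⟩

end RulesOver

section Descent

/-- `A` is closed under the recursion `q_{w,S} ↦ q_{w,S'}, q_{w−w_m,S'}` defining the weight atoms
of the kind `q`, which stands for either `AtomX.qle` or `AtomX.qlt`. -/
def DescentClosed (q : EReal → List (RElem ℕ × ℝ) → AtomX) (A : Set AtomX) : Prop :=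
  ∀ (w : EReal) (T : List (RElem ℕ × ℝ)) (c : RElem ℕ) (v : ℝ),
    q w (T ++ [(c, v)]) ∈ A → q w T ∈ A ∧ q (w - (v : EReal)) T ∈ A

variable {A : Set AtomX} {q : EReal → List (RElem ℕ × ℝ) → AtomX}

theorem DescentClosed.exists_rules_mem_rulesOver (hq : DescentClosed q A)
    (hA : ∀ n, AtomX.base n ∈ A) {w : EReal} {S : List (RElem ℕ × ℝ)}
    (hw : q w S ∈ A) (hS : 0 < sumW S) :
    ∃ (S' : List (RElem ℕ × ℝ)) (c : RElem ℕ) (v : ℝ), S = S' ++ [(c, v)] ∧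
      ⟨atomFml (q w S), atomFml (q w S')⟩ ∈ rulesOver A ∧
      ⟨atomFml (q w S), .conj (reFmlX c) (atomFml (q (w - (v : EReal)) S'))⟩ ∈ rulesOver A := by
  obtain ⟨S', ⟨c, v⟩, rfl⟩ := (List.eq_nil_or_concat' S).resolve_left (ne_nil_of_sumW_pos hS)
  obtain ⟨hdrop, hsub⟩ := hq w S' c v hw
  have hhead := atoms_atomFml_subset.2 hw
  exact ⟨S', c, v, rfl, ⟨hhead, atoms_atomFml_subset.2 hdrop⟩,
    hhead, Set.union_subset (atoms_reFmlX_subset hA c) (atoms_atomFml_subset.2 hsub)⟩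

theorem closedProg_rulesOver (hA : ∀ n, AtomX.base n ∈ A)
    (hle : DescentClosed AtomX.qle A) (hlt : DescentClosed AtomX.qlt A) :
    ClosedProg (rulesOver A) := by
  refine ⟨fun w S hocc => ?_, fun w S hocc => ?_⟩ <;>
    have hw := mem_of_atomOccurs subset_rfl hocc
  · exact ⟨fun _ => ⟨atoms_atomFml_subset.2 hw, Set.empty_subset A⟩, fun hpos hbound =>
      hle.exists_rules_mem_rulesOver hA hw (EReal.coe_pos.1 (hpos.trans_le hbound))⟩
  · exact ⟨fun _ => ⟨atoms_atomFml_subset.2 hw, Set.empty_subset A⟩, fun hnonneg hbound =>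
      hlt.exists_rules_mem_rulesOver hA hw (EReal.coe_pos.1 (hnonneg.trans_lt hbound))⟩

theorem descentClosed_of_mem_iff_residuals {Ω : Set (WRule ℕ)}
    (hint : ∀ C ∈ wcsOf Ω, ∀ p ∈ C.S, ∃ z : ℤ, p.2 = (z : ℝ))
    {bound : WConstraint ℕ → EReal}
    (hq : ∀ w T, q w T ∈ A ↔ ∃ C ∈ wcsOf Ω, (w, T) ∈ residuals (bound C) C.S) :
    DescentClosed q A := by
  intro w T c v h
  obtain ⟨C, hC, hres⟩ := (hq _ _).1 h
  have hmem : (c, v) ∈ C.S := hres.1.subset (by simp)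
  obtain ⟨z, rfl : v = z⟩ := hint C hC _ hmem
  have hz : (0 : ℝ) ≤ z := C.nonneg _ hmem
  lift z to ℕ using mod_cast hz
  obtain ⟨hdrop, hsub⟩ := mem_residuals_of_append_singleton_mem hres
  exact ⟨(hq _ _).2 ⟨C, hC, hdrop⟩, (hq _ _).2 ⟨C, hC, hsub⟩⟩

theorem weightAtoms_nnTrans_subset {Ω : Set (WRule ℕ)}
    (hint : ∀ C ∈ wcsOf Ω, ∀ p ∈ C.S, ∃ z : ℤ, p.2 = (z : ℝ)) :
    {a : AtomX | a.isWeightAtom ∧ atomOccurs a (nnTrans Ω)} ⊆ ⋃ C ∈ wcsOf Ω, C.weightAtoms := by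
  set A : Set AtomX := {a | ¬ a.isWeightAtom} ∪ ⋃ C ∈ wcsOf Ω, C.weightAtoms with hAdef
  have hA : {a : AtomX | ¬ a.isWeightAtom} ⊆ A := Set.subset_union_left
  have hle : ∀ w T, AtomX.qle w T ∈ A ↔ ∃ C ∈ wcsOf Ω, (w, T) ∈ residuals C.L C.S := by
    simp [hAdef, AtomX.isWeightAtom, WConstraint.qle_mem_weightAtoms]
  have hlt : ∀ w T, AtomX.qlt w T ∈ A ↔ ∃ C ∈ wcsOf Ω, (w, T) ∈ residuals C.U C.S := by
    simp [hAdef, AtomX.isWeightAtom, WConstraint.qlt_mem_weightAtoms]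
  have hbase : nnBase Ω ⊆ rulesOver A := nnBase_subset_rulesOver hA fun C hC =>
    ⟨(hle _ _).2 ⟨C, hC, self_mem_residuals _ _⟩, (hlt _ _).2 ⟨C, hC, self_mem_residuals _ _⟩⟩
  have hclosed : ClosedProg (rulesOver A) := closedProg_rulesOver (fun _ => hA id)
    (descentClosed_of_mem_iff_residuals hint hle) (descentClosed_of_mem_iff_residuals hint hlt)
  rintro a ⟨hweight, hocc⟩
  have hsub : nnTrans Ω ⊆ rulesOver A := Set.sInter_subset_of_mem ⟨hbase, hclosed⟩
  have ha : a ∈ A := mem_of_atomOccurs hsub hocc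
  exact ha.resolve_left (not_not_intro hweight)

end Descent

theorem finite_wcsOf {Ω : Set (WRule ℕ)} (hΩ : Ω.Finite) : (wcsOf Ω).Finite := by
  refine (hΩ.biUnion fun R _ => (R.head :: R.body).finite_toSet).subset ?_
  rintro C ⟨R, hR, hC⟩
  exact Set.mem_biUnion hR (List.mem_cons.2 hC)

theorem weight_atoms_bound_general {Ω : Set (WRule ℕ)} (hΩ : (wcsOf Ω).Finite)
    (hint : ∀ C ∈ wcsOf Ω, ∀ p ∈ C.S, ∃ z : ℤ, p.2 = (z : ℝ)) :
    {a : AtomX | a.isWeightAtom ∧ atomOccurs a (nnTrans Ω)}.Finite ∧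
      ({a : AtomX | a.isWeightAtom ∧ atomOccurs a (nnTrans Ω)}.ncard : ℝ) ≤
        2 * ∑ᶠ C ∈ wcsOf Ω, ((C.S.length : ℝ) + 1) * (sumW C.S + 1) := by
  have hsub := weightAtoms_nnTrans_subset hint
  lift wcsOf Ω to Finset (WConstraint ℕ) using hΩ with t
  have hfin : (⋃ C ∈ t, C.weightAtoms).Finite :=
    t.finite_toSet.biUnion fun C _ => C.finite_weightAtoms
  refine ⟨hfin.subset hsub, ?_⟩
  have hcard := (Set.ncard_le_ncard hsub hfin).trans (t.set_ncard_biUnion_le _)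
  calc _ ≤ ∑ C ∈ t, (C.weightAtoms.ncard : ℝ) := mod_cast hcard
    _ ≤ ∑ C ∈ t, 2 * (((C.S.length : ℝ) + 1) * (sumW C.S + 1)) :=
        Finset.sum_le_sum fun C _ => C.ncard_weightAtoms_le
    _ = _ := by rw [finsum_mem_coe_finset, Finset.mul_sum]

/-- Proposition 2: there is a constant `K > 0` such that for every finite program `Ω`
with integer weights, the number of weight atoms occurring in `[Ω]^{nn}` is at most
`K · Σ_C (L(C)+1)·(W(C)+1)`, the sum ranging over the weight constraints `C` of `Ω`. -/
theorem weight_atoms_bound :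
    ∃ K : ℝ, 0 < K ∧
      ∀ Ω : Set (WRule ℕ), Ω.Finite →
        (∀ C ∈ wcsOf Ω, ∀ p ∈ C.S, ∃ z : ℤ, p.2 = (z : ℝ)) →
        {a : AtomX | a.isWeightAtom ∧ atomOccurs a (nnTrans Ω)}.Finite ∧
        ({a : AtomX | a.isWeightAtom ∧ atomOccurs a (nnTrans Ω)}.ncard : ℝ) ≤
          K * ∑ᶠ C ∈ wcsOf Ω, ((C.S.length : ℝ) + 1) * (sumW C.S + 1) := by
  exact ⟨2, two_pos, fun Ω hΩ hint => weight_atoms_bound_general (finite_wcsOf hΩ) hint⟩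
end
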